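/- In the linear regression model Y = Xβ + σξ with deterministic design X all of whose columns X_1,…,X_p are nonzero, for any a > 0, q ≥ 1, integers 1 ≤ s < p, and every real s' ∈ (0, s): inf over measurable estimators β̂ : ℝ^n → ℝ^p of sup_{β ∈ Ω^p_{s,a}} E_β‖β̂(Y) − β‖_q^q ≥ a^q (s'/s) · ( 2^{−q} Ψ(p,s,a,σ,X) − 2 s e^{−(s−s')²/(2s)} ). -/

import Mathlib

/-!
The lower bound is a Bayes risk bound, for the prior on vectors with coordinates in `{0, a}` whose
support contains each index independently with probability `s' / p`.

*Reduction to support recovery.* Thresholding an estimate at `a / 2` gives a support estimate, and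
each misclassified coordinate costs at least `(a / 2) ^ q`. The support estimate may be replaced by
`∅` whenever it has more than `2 * s` elements: against a true support of size at most `s` this does
not increase the Hamming loss (`loss_ge_ham`), and on every larger support `S` it keeps the loss
within `2 * s + |S| ≤ 3 * |S|`.

*Two-point tests.* The Bayes Hamming risk splits over coordinates. Given the other coordinates,
coordinate `j` requires testing `N(θ, σ² I)` against `N(θ + a X_j, σ² I)`. With weights `1 - s / p`
and `s / p`, the likelihood ratio test is optimal and its error is the `j`-th summand of `Ψ`
(`testing_lower_bound`). The prior weights `1 - s' / p` and `s' / p` are at least `s' / s` times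
these, so the Bayes risk is at least `(s' / s) Ψ` (`bayes_coord`, `bayes_hamRisk`).

*Supports that are too large.* The prior also charges supports with more than `s` elements. They
contribute at most `3 E[|S| 1{|S| > s}] ≤ 3 s' exp (-(s - s')² / (2 s))` by a Chernoff bound
(`tail_bound`), so some support of size at most `s` has Hamming risk at least
`(s' / s) Ψ - 3 s' exp (-(s - s')² / (2 s))`. Multiplying by `(a / 2) ^ q` gives the claim, since
`3 * 2 ^ (-q) ≤ 2`.
-/

open MeasureTheory ProbabilityTheory Filter
open scoped ENNReal NNReal BigOperators Classical

noncomputable section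

/-- The Gaussian distribution `N(m, σ²)` on `ℝ`. -/
def gauss (m σ : ℝ) : Measure ℝ := gaussianReal m ⟨σ ^ 2, sq_nonneg σ⟩

/-- The standard Gaussian distribution on `ℝ`. -/
def stdG : Measure ℝ := gaussianReal 0 1

/-- The law of a standard Gaussian vector `ξ ~ N(0, I_n)` on `ℝⁿ`. -/
def stdGV (n : ℕ) : Measure (Fin n → ℝ) := Measure.pi fun _ => gaussianReal 0 1

/-- `Ω^p_{s,a}`: `s`-sparse vectors with nonzero coordinates at least `a` in absolute value. -/
def sparseSet (p s : ℕ) (a : ℝ) : Set (Fin p → ℝ) :=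
  {β | (Finset.univ.filter fun i => β i ≠ 0).card ≤ s ∧ ∀ i, β i ≠ 0 → a ≤ |β i|}

/-- The risk `E_β ‖est(Y) − β‖_q^q` in the linear regression model `Y = Xβ + σξ`. -/
def linRisk (n p : ℕ) (X : Matrix (Fin n) (Fin p) ℝ) (σ q : ℝ)
    (est : (Fin n → ℝ) → Fin p → ℝ) (β : Fin p → ℝ) : ℝ≥0∞ :=
  ∫⁻ ξ, ENNReal.ofReal (∑ j, |est (X.mulVec β + σ • ξ) j - β j| ^ q) ∂(stdGV n)

/-- The Euclidean norm `‖X_j‖₂` of the `j`-th column of `X`. -/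
def colNorm (n p : ℕ) (X : Matrix (Fin n) (Fin p) ℝ) (j : Fin p) : ℝ :=
  Real.sqrt (∑ i, (X i j) ^ 2)

/-- `σ_q^q = E|η|^q` where `η ~ N(0, σ²)`. -/
def sigmaqq (σ q : ℝ) : ℝ := ∫ x, |x| ^ q ∂(gauss 0 σ)

/-- `P(σ ε ≥ t)` for a standard Gaussian `ε`. -/
def PgeS (σ t : ℝ) : ℝ := (stdG {x | t ≤ σ * x}).toReal

/-- The threshold `t_j(a) = a/2 + σ² log(p/s − 1)/(a ‖X_j‖₂²)`. -/
def tj (n p s : ℕ) (X : Matrix (Fin n) (Fin p) ℝ) (σ a : ℝ) (j : Fin p) : ℝ :=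
  a / 2 + σ ^ 2 * Real.log ((p : ℝ) / s - 1) / (a * colNorm n p X j ^ 2)

/-- `Ψ(p,s,a,σ,X)` from the paper. -/
def PsiX (n p s : ℕ) (X : Matrix (Fin n) (Fin p) ℝ) (σ a : ℝ) : ℝ :=
  ∑ j, ((s : ℝ) / p * PgeS σ ((a - tj n p s X σ a j) * colNorm n p X j)
    + (1 - (s : ℝ) / p) * PgeS σ (tj n p s X σ a j * colNorm n p X j))

/-! ### Standard Gaussian vectors: translation and projection -/

lemma gaussianReal_one_eq_withDensity (u : ℝ) :
    gaussianReal u 1 = (gaussianReal 0 1).withDensity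
      (fun x => ENNReal.ofReal (Real.exp (u * x - u ^ 2 / 2))) := by
  rw [gaussianReal_of_var_ne_zero _ one_ne_zero, gaussianReal_of_var_ne_zero _ one_ne_zero,
    ← withDensity_mul _ (by fun_prop) (by fun_prop)]
  congr 1
  ext x
  simp only [gaussianPDF, Pi.mul_apply]
  rw [← ENNReal.ofReal_mul (gaussianPDFReal_nonneg _ _ _)]
  congr 1
  simp only [gaussianPDFReal]
  rw [mul_assoc _ (Real.exp _) (Real.exp _), ← Real.exp_add]
  congr 2
  simp
  ring

/-- Cameron–Martin formula for the standard Gaussian vector: translating by `u` amounts to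
reweighting by `exp (⟨u, ξ⟩ - ‖u‖² / 2)`. -/
lemma stdGV_shift {n : ℕ} (u : Fin n → ℝ) {A : Set (Fin n → ℝ)} (hA : MeasurableSet A) :
    stdGV n {ξ | u + ξ ∈ A} =
      ∫⁻ ξ in A, ENNReal.ofReal (Real.exp (u ⬝ᵥ ξ - u ⬝ᵥ u / 2)) ∂(stdGV n) := by
  set f : Fin n → ℝ → ℝ≥0∞ := fun i x => ENNReal.ofReal (Real.exp (u i * x - u i ^ 2 / 2)) with hf
  have hfm : ∀ i, Measurable (f i) := fun i => by fun_prop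
  have h1 : (stdGV n).map (fun ξ => u + ξ) = Measure.pi fun i => gaussianReal (u i) 1 := by
    have := Measure.pi_map_pi (μ := fun _ : Fin n => gaussianReal 0 1) (f := fun i x => u i + x)
      (fun i => by fun_prop)
    simp only [gaussianReal_map_const_add, zero_add] at this
    exact this
  have h2 : (Measure.pi fun i => gaussianReal (u i) 1) = (stdGV n).withDensity
      (fun ξ => ∏ i, f i (ξ i)) := by
    refine Measure.pi_eq fun s hs => ?_
    rw [withDensity_apply _ (MeasurableSet.univ_pi hs), ← lintegral_indicator (MeasurableSet.univ_pi hs)]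
    have e : ∀ ξ : Fin n → ℝ, (Set.univ.pi s).indicator (fun ξ => ∏ i, f i (ξ i)) ξ
        = ∏ i, (s i).indicator (f i) (ξ i) := by
      intro ξ
      by_cases h : ξ ∈ Set.univ.pi s
      · rw [Set.indicator_of_mem h]
        exact Finset.prod_congr rfl fun i _ => (Set.indicator_of_mem (h i trivial) _).symm
      · rw [Set.indicator_of_notMem h]
        simp only [Set.mem_pi, Set.mem_univ, true_imp_iff, not_forall] at h
        obtain ⟨i, hi⟩ := h
        exact (Finset.prod_eq_zero (Finset.mem_univ i) (Set.indicator_of_notMem hi _)).symm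
    simp_rw [e]
    have hi := iIndepFun_pi (μ := fun _ : Fin n => gaussianReal 0 1)
      (X := fun i => (s i).indicator (f i)) (fun i => ((hfm i).indicator (hs i)).aemeasurable)
    have := lintegral_prod_eq_prod_lintegral_of_indepFun Finset.univ
      (fun i (ξ : Fin n → ℝ) => (s i).indicator (f i) (ξ i)) hi
      (fun i => ((hfm i).indicator (hs i)).comp (measurable_pi_apply i))
    rw [stdGV, this]
    refine Finset.prod_congr rfl fun i _ => ?_
    rw [gaussianReal_one_eq_withDensity (u i), withDensity_apply _ (hs i), ← lintegral_indicator (hs i)]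
    exact (measurePreserving_eval (fun _ : Fin n => gaussianReal 0 1) i).lintegral_comp
      ((hfm i).indicator (hs i))
  have h3 : stdGV n {ξ | u + ξ ∈ A} = (stdGV n).map (fun ξ => u + ξ) A :=
    (Measure.map_apply (by fun_prop) hA).symm
  rw [h3, h1, h2, withDensity_apply _ hA]
  refine lintegral_congr fun ξ => ?_
  rw [hf, ← ENNReal.ofReal_prod_of_nonneg fun i _ => (Real.exp_pos _).le, ← Real.exp_sum]
  congr 2
  simp only [dotProduct, Finset.sum_sub_distrib, ← Finset.sum_div, pow_two]

/-- The projection of a standard Gaussian vector on `c` has the law of `‖c‖` times a standard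
Gaussian variable. -/
lemma stdGV_map_dotProduct {n : ℕ} (c : Fin n → ℝ) (r : ℝ) (hr : r ^ 2 = ∑ i, c i ^ 2) :
    (stdGV n).map (fun ξ => c ⬝ᵥ ξ) = stdG.map (fun x => r * x) := by
  have hm : Measurable (fun ξ : Fin n → ℝ => c ⬝ᵥ ξ) := by unfold dotProduct; fun_prop
  have : IsProbabilityMeasure (stdGV n) := by unfold stdGV; infer_instance
  have : IsProbabilityMeasure stdG := by unfold stdG; infer_instance
  have : IsProbabilityMeasure ((stdGV n).map (fun ξ => c ⬝ᵥ ξ)) :=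
    Measure.isProbabilityMeasure_map hm.aemeasurable
  have : IsProbabilityMeasure (stdG.map (fun x => r * x)) :=
    Measure.isProbabilityMeasure_map (by fun_prop)
  apply Measure.ext_of_charFun
  ext t
  rw [stdG, gaussianReal_map_const_mul, charFun_gaussianReal, charFun_apply_real,
    integral_map hm.aemeasurable (by fun_prop)]
  -- both laws are compared through the characteristic function of `ξ` at the vector `t • c`
  have := charFun_stdGaussian (E := EuclideanSpace ℝ (Fin n)) (WithLp.toLp 2 (t • c))
  rw [← map_pi_eq_stdGaussian, charFun_apply, integral_map (by fun_prop) (by fun_prop)] at this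
  rw [stdGV]
  convert this using 1
  · refine integral_congr_ae (.of_forall fun ξ => ?_)
    simp only [PiLp.inner_apply, dotProduct]
    congr 2
    push_cast
    simp [Finset.mul_sum]
    exact Finset.sum_congr rfl fun i _ => by ring
  · rw [← Complex.ofReal_pow ‖_‖, EuclideanSpace.norm_sq_eq]
    congr 1
    simp [mul_pow, ← Finset.mul_sum, ← hr]
    ring

/-! ### Testing between two shifted Gaussian vectors -/

/-- Neyman–Pearson lemma: among the regions `C` on which to pay `f`, paying `g` outside, the region
`{f ≤ g}` is the cheapest, with total cost `∫ min f g`. -/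
lemma lintegral_min_le {Ω : Type*} [MeasurableSpace Ω] (μ : Measure Ω) {f g : Ω → ℝ≥0∞}
    (hf : Measurable f) (hg : Measurable g) {C : Set Ω} (hC : MeasurableSet C) :
    ∫⁻ x in {x | f x ≤ g x}, f x ∂μ + ∫⁻ x in {x | f x ≤ g x}ᶜ, g x ∂μ
      ≤ ∫⁻ x in C, f x ∂μ + ∫⁻ x in Cᶜ, g x ∂μ := by
  have hD : MeasurableSet {x | f x ≤ g x} := measurableSet_le hf hg
  calc _ = ∫⁻ x in {x | f x ≤ g x}, min (f x) (g x) ∂μ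
          + ∫⁻ x in {x | f x ≤ g x}ᶜ, min (f x) (g x) ∂μ := by
        congr 1
        · exact setLIntegral_congr_fun hD fun x hx => (min_eq_left hx).symm
        · exact setLIntegral_congr_fun hD.compl fun x hx =>
            (min_eq_right (le_of_lt (lt_of_not_ge (by simpa using hx)))).symm
    _ = ∫⁻ x in C, min (f x) (g x) ∂μ + ∫⁻ x in Cᶜ, min (f x) (g x) ∂μ := by
        rw [lintegral_add_compl _ hD, lintegral_add_compl _ hC]
    _ ≤ _ := by
        gcongr <;> simp

/-- Every test `B` of mean `θ` (weight `1 - ρ`) against mean `θ + a • x` (weight `ρ`) has weighted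
error at least that of the likelihood ratio test, which thresholds the projection on `x` at `t`;
here `r` is the Euclidean norm of `x`. -/
lemma testing_lower_bound {n : ℕ} (x θ : Fin n → ℝ) (σ a ρ r t : ℝ) (hσ : 0 < σ) (ha : 0 < a)
    (hρ : 0 < ρ) (hρ1 : ρ < 1) (hr : 0 < r) (hrx : r ^ 2 = ∑ i, x i ^ 2)
    (ht : t = a / 2 + σ ^ 2 * Real.log ((1 - ρ) / ρ) / (a * r ^ 2))
    {B : Set (Fin n → ℝ)} (hB : MeasurableSet B) :
    ρ * PgeS σ ((a - t) * r) + (1 - ρ) * PgeS σ (t * r) ≤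
      (1 - ρ) * (stdGV n).real {ξ | θ + σ • ξ ∈ B}
        + ρ * (stdGV n).real {ξ | θ + a • x + σ • ξ ∉ B} := by
  have : IsProbabilityMeasure (stdGV n) := by unfold stdGV; infer_instance
  have : IsProbabilityMeasure stdG := by unfold stdG; infer_instance
  have : NullSingletonClass stdG := by
    unfold stdG; exact nullSingletonClass_gaussianReal one_ne_zero
  set u : Fin n → ℝ := (a / σ) • x with hu
  set C : Set (Fin n → ℝ) := {ξ | θ + σ • ξ ∈ B} with hCdef
  have hC : MeasurableSet C := (show Measurable fun ξ : Fin n → ℝ => θ + σ • ξ by fun_prop) hB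
  have hC' : {ξ | θ + a • x + σ • ξ ∉ B} = {ξ | u + ξ ∈ Cᶜ} := by
    ext ξ
    simp only [Set.mem_ofPred_eq, hCdef, Set.mem_compl_iff, hu, smul_add, smul_smul, add_assoc]
    rw [mul_div_cancel₀ _ hσ.ne']
  have hdot : Measurable (fun ξ : Fin n → ℝ => x ⬝ᵥ ξ) := by unfold dotProduct; fun_prop
  have hdotu : Measurable (fun ξ : Fin n → ℝ => u ⬝ᵥ ξ) := by unfold dotProduct; fun_prop
  set f : (Fin n → ℝ) → ℝ≥0∞ := fun _ => ENNReal.ofReal (1 - ρ) with hf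
  set g : (Fin n → ℝ) → ℝ≥0∞ := fun ξ =>
    ENNReal.ofReal ρ * ENNReal.ofReal (Real.exp (u ⬝ᵥ ξ - u ⬝ᵥ u / 2)) with hg
  have hgm : Measurable g := by fun_prop
  have hxx : x ⬝ᵥ x = r ^ 2 := by rw [hrx]; simp [dotProduct, pow_two]
  -- the likelihood ratio exceeds `(1 - ρ) / ρ` iff the projection on `x` exceeds `t * r ^ 2`
  have hD : {ξ | f ξ ≤ g ξ} = {ξ | t * r ^ 2 ≤ σ * (x ⬝ᵥ ξ)} := by
    ext ξ
    simp only [Set.mem_ofPred_eq, hf, hg]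
    rw [← ENNReal.ofReal_mul hρ.le, ENNReal.ofReal_le_ofReal_iff (by positivity), mul_comm,
      ← div_le_iff₀ hρ, ← Real.log_le_iff_le_exp (div_pos (by linarith) hρ), ht, hu,
      smul_dotProduct, smul_dotProduct, dotProduct_smul, hxx]
    simp only [smul_eq_mul]
    have e1 : (a / 2 + σ ^ 2 * Real.log ((1 - ρ) / ρ) / (a * r ^ 2)) * r ^ 2
        = (σ ^ 2 / a) * (Real.log ((1 - ρ) / ρ) + a / σ * (a / σ * r ^ 2) / 2) := by
      field_simp
      ring
    have e2 : σ * (x ⬝ᵥ ξ) = (σ ^ 2 / a) * (a / σ * (x ⬝ᵥ ξ)) := by field_simp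
    rw [e1, e2, mul_le_mul_iff_right₀ (by positivity), le_sub_iff_add_le]
  have key : ∀ E : Set (Fin n → ℝ), MeasurableSet E →
      ∫⁻ ξ in E, f ξ ∂(stdGV n) + ∫⁻ ξ in Eᶜ, g ξ ∂(stdGV n) = ENNReal.ofReal
        ((1 - ρ) * (stdGV n).real E + ρ * (stdGV n).real {ξ | u + ξ ∈ Eᶜ}) := by
    intro E hE
    rw [hf, hg, lintegral_const_mul _ (by fun_prop), ← stdGV_shift u hE.compl, setLIntegral_const,
      ENNReal.ofReal_add (mul_nonneg (by linarith) measureReal_nonneg)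
        (mul_nonneg hρ.le measureReal_nonneg),
      ENNReal.ofReal_mul (by linarith), ENNReal.ofReal_mul hρ.le, ofReal_measureReal,
      ofReal_measureReal]
  have main := lintegral_min_le (stdGV n) (measurable_const : Measurable f) hgm hC
  have hDm : MeasurableSet {ξ | f ξ ≤ g ξ} := measurableSet_le measurable_const hgm
  rw [key _ hDm, key _ hC, ENNReal.ofReal_le_ofReal_iff (by
    have : 0 ≤ 1 - ρ := by linarith
    positivity)] at main
  rw [hC']
  refine le_trans (le_of_eq ?_) main
  have hlaw := stdGV_map_dotProduct x r hrx
  have m1 : (stdGV n).real {ξ | f ξ ≤ g ξ} = PgeS σ (t * r) := by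
    rw [hD, PgeS, Measure.real]
    have hS : MeasurableSet {y : ℝ | t * r ^ 2 ≤ σ * y} :=
      measurableSet_le measurable_const (by fun_prop)
    have h := congrArg (fun μ => μ {y : ℝ | t * r ^ 2 ≤ σ * y}) hlaw
    simp only [Measure.map_apply hdot hS, Measure.map_apply (measurable_const_mul r) hS] at h
    rw [Set.preimage_ofPred_eq] at h
    rw [h]
    congr 2
    ext z
    simp only [Set.mem_preimage, Set.mem_ofPred_eq]
    rw [show t * r ^ 2 = r * (t * r) by ring, show σ * (r * z) = r * (σ * z) by ring,
      mul_le_mul_iff_right₀ hr]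
  have m2 : (stdGV n).real {ξ | u + ξ ∈ {ξ | f ξ ≤ g ξ}ᶜ} = PgeS σ ((a - t) * r) := by
    have hset : {ξ | u + ξ ∈ {ξ | f ξ ≤ g ξ}ᶜ} = {ξ | σ * (x ⬝ᵥ ξ) < (t - a) * r ^ 2} := by
      ext ξ
      rw [hD]
      simp only [Set.mem_compl_iff, Set.mem_ofPred_eq, not_le, dotProduct_add, hu, dotProduct_smul,
        hxx, smul_eq_mul]
      have : σ * (a / σ * r ^ 2 + x ⬝ᵥ ξ) = a * r ^ 2 + σ * (x ⬝ᵥ ξ) := by field_simp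
      rw [this]
      constructor <;> intro h <;> linarith
    rw [hset, PgeS, Measure.real]
    have hS : MeasurableSet {y : ℝ | σ * y < (t - a) * r ^ 2} :=
      measurableSet_lt (by fun_prop) measurable_const
    have h := congrArg (fun μ => μ {y : ℝ | σ * y < (t - a) * r ^ 2}) hlaw
    simp only [Measure.map_apply hdot hS, Measure.map_apply (measurable_const_mul r) hS] at h
    rw [Set.preimage_ofPred_eq] at h
    rw [h]
    -- by symmetry of the Gaussian, the lower tail at `(t - a) * r` is the upper tail at
    -- `(a - t) * r`, up to the null boundary point
    have hneg : stdG.map (fun z => -z) = stdG := by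
      unfold stdG; rw [gaussianReal_map_neg, neg_zero]
    have h2 : (fun z => r * z) ⁻¹' {y : ℝ | σ * y < (t - a) * r ^ 2} = Set.Iio ((t - a) * r / σ) := by
      ext z
      simp only [Set.mem_preimage, Set.mem_ofPred_eq, Set.mem_Iio]
      rw [show (t - a) * r ^ 2 = r * ((t - a) * r) by ring, show σ * (r * z) = r * (σ * z) by ring,
        mul_lt_mul_iff_right₀ hr, lt_div_iff₀ hσ, mul_comm z]
    have h3 : {z : ℝ | (a - t) * r ≤ σ * z} = (fun z => -z) ⁻¹' Set.Iic ((t - a) * r / σ) := by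
      ext z
      simp only [Set.mem_preimage, Set.mem_ofPred_eq, Set.mem_Iic]
      rw [le_div_iff₀ hσ]
      constructor <;> intro h <;> linarith
    rw [h2, h3, ← Measure.map_apply measurable_neg measurableSet_Iic, hneg,
      measure_congr Iio_ae_eq_Iic]
  rw [m1, m2]
  ring

/-! ### The Bernoulli prior on supports -/

/-- Pairing each support avoiding `j` with the one obtained by inserting `j`. -/
lemma sum_finset_split {p : ℕ} (j : Fin p) (F : Finset (Fin p) → ℝ) :
    ∑ S, F S = ∑ S ∈ (Finset.univ.erase j).powerset, (F S + F (insert j S)) := by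
  rw [Finset.sum_add_distrib, ← Finset.sum_powerset_insert (Finset.notMem_erase j _),
    Finset.insert_erase (Finset.mem_univ j), Finset.powerset_univ]

/-- The prior weight of the support `S` when every coordinate of `Fin p` belongs to the support
independently with probability `π`. -/
def bernWeight {p : ℕ} (π : ℝ) (S : Finset (Fin p)) : ℝ :=
  π ^ S.card * (1 - π) ^ (p - S.card)

lemma bernWeight_nonneg {p : ℕ} {π : ℝ} (h0 : 0 ≤ π) (h1 : π ≤ 1) (S : Finset (Fin p)) :
    0 ≤ bernWeight π S :=
  mul_nonneg (pow_nonneg h0 _) (pow_nonneg (by linarith) _)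

lemma sum_bernWeight {p : ℕ} (π : ℝ) : ∑ S : Finset (Fin p), bernWeight π S = 1 := by
  have := Finset.sum_pow_mul_eq_add_pow π (1 - π) (Finset.univ : Finset (Fin p))
  simpa [bernWeight] using this

lemma bernWeight_of_subset_erase {p : ℕ} (π : ℝ) {j : Fin p} {S : Finset (Fin p)}
    (hS : S ∈ (Finset.univ.erase j).powerset) :
    bernWeight π S = (1 - π) * (π ^ S.card * (1 - π) ^ (p - 1 - S.card)) ∧
    bernWeight π (insert j S) = π * (π ^ S.card * (1 - π) ^ (p - 1 - S.card)) := by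
  have hj : j ∉ S := fun h => Finset.notMem_erase j _ (Finset.mem_powerset.1 hS h)
  have hc : S.card ≤ p - 1 := by
    simpa using Finset.card_le_card (Finset.mem_powerset.1 hS)
  have hp : 0 < p := j.pos
  refine ⟨?_, ?_⟩
  · rw [bernWeight, show p - S.card = (p - 1 - S.card) + 1 by omega]
    ring
  · rw [bernWeight, Finset.card_insert_of_notMem hj,
      show p - (S.card + 1) = p - 1 - S.card by omega]
    ring

/-- For `x + y = 1` this is the total mass of the prior on the coordinates other than `j`. -/
lemma sum_erase_pow {p : ℕ} (j : Fin p) (x y : ℝ) :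
    ∑ S ∈ (Finset.univ.erase j).powerset, x ^ S.card * y ^ (p - 1 - S.card)
      = (x + y) ^ (p - 1) := by
  have := Finset.sum_pow_mul_eq_add_pow x y (Finset.univ.erase j)
  simpa using this

/-- Averaging over the coordinates other than `j` turns a bound on the two-point testing error
with weights `(1 - ρ, ρ)` into a bound on the Bayes error with prior probability `κ * ρ`. -/
lemma bayes_coord {p : ℕ} (j : Fin p) (ρ κ b : ℝ) (hρ : 0 ≤ ρ) (hρ1 : ρ ≤ 1) (hκ : 0 ≤ κ)
    (hκ1 : κ ≤ 1) (err : Finset (Fin p) → ℝ) (herr : ∀ S, 0 ≤ err S)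
    (hb : ∀ S, j ∉ S → b ≤ (1 - ρ) * err S + ρ * err (insert j S)) :
    κ * b ≤ ∑ S, bernWeight (κ * ρ) S * err S := by
  have hκρ : κ * ρ ≤ 1 := mul_le_one₀ hκ1 hρ hρ1
  have hκρ0 : 0 ≤ κ * ρ := mul_nonneg hκ hρ
  rw [sum_finset_split j]
  calc κ * b = ∑ S ∈ (Finset.univ.erase j).powerset,
        ((κ * ρ) ^ S.card * (1 - κ * ρ) ^ (p - 1 - S.card)) * (κ * b) := by
        rw [← Finset.sum_mul, sum_erase_pow]; simp
    _ ≤ _ := by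
        refine Finset.sum_le_sum fun S hS => ?_
        have hj : j ∉ S := fun h => Finset.notMem_erase j _ (Finset.mem_powerset.1 hS h)
        obtain ⟨e1, e2⟩ := bernWeight_of_subset_erase (κ * ρ) hS
        rw [e1, e2]
        have hv : 0 ≤ (κ * ρ) ^ S.card * (1 - κ * ρ) ^ (p - 1 - S.card) :=
          mul_nonneg (pow_nonneg hκρ0 _) (pow_nonneg (by linarith) _)
        have h1 : κ * b ≤ (1 - κ * ρ) * err S + κ * ρ * err (insert j S) := by
          have h2 := mul_le_mul_of_nonneg_left (hb S hj) hκ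
          have h3 : κ * (1 - ρ) * err S ≤ (1 - κ * ρ) * err S :=
            mul_le_mul_of_nonneg_right (by linarith) (herr S)
          nlinarith
        have := mul_le_mul_of_nonneg_left h1 hv
        linarith

lemma add_sq_half_le_neg_log {v : ℝ} (h0 : 0 ≤ v) (h1 : v < 1) :
    v + v ^ 2 / 2 ≤ -Real.log (1 - v) := by
  have h := Real.hasSum_pow_div_log_of_abs_lt_one (x := v) (by rwa [abs_of_nonneg h0])
  have := sum_le_hasSum (Finset.range 2) (fun i _ => by positivity) h
  norm_num [Finset.sum_range_succ] at this
  linarith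

/-- Chernoff bound for the size-biased tail `E[|S| 1{|S| > s}]` of the prior, at the exponential
tilt `s / s'`. -/
lemma tail_bound {p s : ℕ} {s' : ℝ} (hs' : 0 < s') (hss : s' < s) (hsp : s < p) :
    ∑ S : Finset (Fin p), bernWeight (s' / p) S * (if s < S.card then (S.card : ℝ) else 0)
      ≤ s' * Real.exp (-((s : ℝ) - s') ^ 2 / (2 * s)) := by
  have hs : (0 : ℝ) < s := hs'.trans hss
  have hp : (0 : ℝ) < p := hs.trans (by exact_mod_cast hsp)
  have hsp' : (s : ℝ) < p := by exact_mod_cast hsp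
  set π : ℝ := s' / p with hπ
  have hπ0 : 0 ≤ π := by positivity
  have hπ1 : π ≤ 1 := by rw [hπ, div_le_one hp]; linarith
  set l : ℝ := s / s' with hl
  have hl0 : 0 < l := by positivity
  have hl1 : 1 ≤ l := by rw [hl, one_le_div hs']; exact hss.le
  -- derivative of the generating function `(π * l + (1 - π)) ^ p` in `l`
  have hmean : ∑ S : Finset (Fin p), bernWeight π S * (S.card * l ^ (S.card - 1))
      = p * π * (π * l + (1 - π)) ^ (p - 1) := by
    have e : ∀ S : Finset (Fin p), bernWeight π S * (S.card * l ^ (S.card - 1))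
        = ∑ j, if j ∈ S then bernWeight π S * l ^ (S.card - 1) else 0 := by
      intro S
      rw [← Finset.sum_filter, Finset.sum_const, nsmul_eq_mul, Finset.filter_univ_mem]
      ring
    simp_rw [e]
    rw [Finset.sum_comm]
    have e2 : ∀ j : Fin p, ∑ S : Finset (Fin p), (if j ∈ S then bernWeight π S * l ^ (S.card - 1)
        else 0) = π * (π * l + (1 - π)) ^ (p - 1) := by
      intro j
      rw [sum_finset_split j, ← sum_erase_pow j, Finset.mul_sum]
      refine Finset.sum_congr rfl fun S hS => ?_
      have hj : j ∉ S := fun h => Finset.notMem_erase j _ (Finset.mem_powerset.1 hS h)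
      rw [if_neg hj, if_pos (Finset.mem_insert_self _ _), (bernWeight_of_subset_erase π hS).2,
        Finset.card_insert_of_notMem hj, Nat.add_sub_cancel, mul_pow]
      ring
    simp_rw [e2]
    simp
    ring
  have h1 : ∑ S : Finset (Fin p), bernWeight π S * (if s < S.card then (S.card : ℝ) else 0)
      ≤ (p * π * (π * l + (1 - π)) ^ (p - 1)) / l ^ s := by
    rw [← hmean, Finset.sum_div]
    refine Finset.sum_le_sum fun S _ => ?_
    rw [mul_div_assoc]
    refine mul_le_mul_of_nonneg_left ?_ (bernWeight_nonneg hπ0 hπ1 S)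
    split_ifs with h
    · rw [le_div_iff₀ (by positivity)]
      exact mul_le_mul_of_nonneg_left (pow_le_pow_right₀ hl1 (by omega)) (by positivity)
    · positivity
  refine h1.trans ?_
  have h2 : (π * l + (1 - π)) ^ (p - 1) ≤ Real.exp (s - s') := by
    have h3 : π * l + (1 - π) ≤ Real.exp (π * (l - 1)) := by
      have := Real.add_one_le_exp (π * (l - 1))
      linarith
    have h4 : 1 ≤ Real.exp (π * (l - 1)) :=
      Real.one_le_exp (mul_nonneg hπ0 (by linarith))
    calc _ ≤ Real.exp (π * (l - 1)) ^ (p - 1) :=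
          pow_le_pow_left₀ (add_nonneg (by positivity) (by linarith)) h3 _
      _ ≤ Real.exp (π * (l - 1)) ^ p := pow_le_pow_right₀ h4 (by omega)
      _ = Real.exp (s - s') := by
          rw [← Real.exp_nat_mul]
          congr 1
          rw [hπ, hl]
          field_simp
  have h5 : l ^ s = Real.exp (s * Real.log l) := by
    rw [Real.exp_nat_mul, Real.exp_log hl0]
  have h6 : (s - s') - s * Real.log l ≤ -((s : ℝ) - s') ^ 2 / (2 * s) := by
    have hv := add_sq_half_le_neg_log (v := 1 - s' / s)
      (by rw [sub_nonneg, div_le_one hs]; exact hss.le) (by have := div_pos hs' hs; linarith)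
    rw [sub_sub_cancel, ← Real.log_inv, inv_div, ← hl] at hv
    have := mul_le_mul_of_nonneg_left hv hs.le
    have e : (s : ℝ) * (1 - s' / s + (1 - s' / s) ^ 2 / 2)
        = (s - s') + ((s : ℝ) - s') ^ 2 / (2 * s) := by field_simp
    rw [e] at this
    rw [neg_div]
    linarith
  rw [show (p : ℝ) * π = s' by rw [hπ]; field_simp, mul_div_assoc]
  refine mul_le_mul_of_nonneg_left ?_ hs'.le
  calc _ ≤ Real.exp (s - s') / l ^ s := by gcongr
    _ = Real.exp ((s - s') - s * Real.log l) := by rw [h5, ← Real.exp_sub]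
    _ ≤ _ := Real.exp_le_exp.2 h6

/-! ### Reduction to support recovery -/

/-- The support selected by the estimate `b`: the coordinates exceeding `a / 2`, or nothing when
there are more than `2 * s` of them. -/
def truncSel {p : ℕ} (s : ℕ) (a : ℝ) (b : Fin p → ℝ) : Finset (Fin p) :=
  if (Finset.univ.filter fun j => a / 2 < b j).card ≤ 2 * s then
    Finset.univ.filter fun j => a / 2 < b j else ∅

lemma card_truncSel_le {p : ℕ} (s : ℕ) (a : ℝ) (b : Fin p → ℝ) :
    (truncSel s a b).card ≤ 2 * s := by
  unfold truncSel
  split_ifs with h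
  · exact h
  · simp

/-- The number of coordinates on which two supports disagree. -/
def ham {p : ℕ} (T S : Finset (Fin p)) : ℝ := ∑ j, if (j ∈ T ↔ j ∈ S) then 0 else 1

lemma ham_eq_card {p : ℕ} (T S : Finset (Fin p)) : ham T S = (symmDiff T S).card := by
  rw [ham, Finset.card_eq_sum_ones, Nat.cast_sum, ← Finset.sum_filter_add_sum_filter_not
    Finset.univ (fun j => j ∈ T ↔ j ∈ S)]
  rw [Finset.sum_eq_zero (fun j hj => if_pos (Finset.mem_filter.1 hj).2), zero_add]
  refine Finset.sum_congr ?_ fun j hj => ?_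
  · ext j
    simp only [Finset.mem_filter, Finset.mem_univ, true_and, Finset.mem_symmDiff]
    tauto
  · rw [if_neg]
    · simp
    · have := (Finset.mem_symmDiff.1 hj)
      tauto

/-- The `0/a`-valued vector with support `S`. -/
def spike {p : ℕ} (a : ℝ) (S : Finset (Fin p)) : Fin p → ℝ := fun j => if j ∈ S then a else 0

lemma spike_mem {p s : ℕ} {a : ℝ} {S : Finset (Fin p)} (hS : S.card ≤ s) :
    spike a S ∈ sparseSet p s a := by
  refine ⟨le_trans (Finset.card_le_card fun j hj => ?_) hS, fun j hj => ?_⟩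
  · by_contra h
    simp [spike, h] at hj
  · by_cases h : j ∈ S
    · simp [spike, h, le_abs_self]
    · simp [spike, h] at hj

lemma mulVec_spike_insert {n p : ℕ} (X : Matrix (Fin n) (Fin p) ℝ) (a : ℝ) {j : Fin p}
    {S : Finset (Fin p)} (hj : j ∉ S) :
    X.mulVec (spike a (insert j S)) = X.mulVec (spike a S) + a • (fun i => X i j) := by
  have : spike a (insert j S) = spike a S + Pi.single j a := by
    ext k
    by_cases hk : k = j
    · subst hk; simp [spike, hj]
    · simp [spike, hk]
  rw [this, Matrix.mulVec_add, Matrix.mulVec_single]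
  congr 1
  ext i
  simp [mul_comm]

/-- On a support of size at most `s`, truncating the thresholded support does not increase the
Hamming loss, and each wrongly classified coordinate costs at least `(a / 2) ^ q`. -/
lemma loss_ge_ham {p s : ℕ} {a q : ℝ} (ha : 0 < a) (hq : 1 ≤ q) (b : Fin p → ℝ)
    {S : Finset (Fin p)} (hS : S.card ≤ s) :
    (a / 2) ^ q * ham (truncSel s a b) S ≤ ∑ j, |b j - spike a S j| ^ q := by
  set e : Finset (Fin p) := Finset.univ.filter fun j => a / 2 < b j with he
  have h1 : ham (truncSel s a b) S ≤ ham e S := by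
    unfold truncSel
    split_ifs with h
    · exact le_rfl
    · rw [ham_eq_card, ham_eq_card, Nat.cast_le]
      -- a selection of more than `2 * s` indices is wrong on more than `s` of them, whereas `∅`
      -- is wrong on only `|S| ≤ s`
      have h2 : e.card ≤ (symmDiff e S).card + S.card := by
        refine (Finset.card_le_card fun j hj => ?_).trans (Finset.card_union_le _ _)
        by_cases hjS : j ∈ S
        · exact Finset.mem_union_right _ hjS
        · exact Finset.mem_union_left _ (Finset.mem_symmDiff.2 (Or.inl ⟨hj, hjS⟩))
      have h3 : (symmDiff (∅ : Finset (Fin p)) S).card = S.card := by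
        rw [← Finset.bot_eq_empty, bot_symmDiff]
      have h4 : ¬ e.card ≤ 2 * s := h
      omega
  refine (mul_le_mul_of_nonneg_left h1 (by positivity)).trans ?_
  rw [ham, Finset.mul_sum]
  refine Finset.sum_le_sum fun j _ => ?_
  split_ifs with h
  · rw [mul_zero]; positivity
  · rw [mul_one]
    refine Real.rpow_le_rpow (by positivity) ?_ (by linarith)
    simp only [he, Finset.mem_filter, Finset.mem_univ, true_and] at h
    unfold spike
    split_ifs with hjS
    · have : ¬ a / 2 < b j := fun h' => h (by simp [h', hjS])
      rw [abs_sub_comm]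
      exact le_trans (by linarith) (le_abs_self _)
    · have : a / 2 < b j := by
        by_contra h'
        exact h (by simp [h', hjS])
      exact le_trans (by linarith) (le_abs_self _)

lemma measurableSet_truncSel {p : ℕ} (s : ℕ) (a : ℝ) (j : Fin p) :
    MeasurableSet {b : Fin p → ℝ | j ∈ truncSel s a b} := by
  have hm : ∀ k : Fin p, MeasurableSet {b : Fin p → ℝ | a / 2 < b k} := fun k =>
    measurableSet_lt measurable_const (measurable_pi_apply k)
  have hc : Measurable fun b : Fin p → ℝ => (Finset.univ.filter fun k => a / 2 < b k).card := by
    simp_rw [Finset.card_filter]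
    exact Finset.measurable_fun_sum _ fun k _ =>
      Measurable.ite (hm k) measurable_const measurable_const
  have : {b : Fin p → ℝ | j ∈ truncSel s a b} =
      {b | (Finset.univ.filter fun k => a / 2 < b k).card ≤ 2 * s} ∩ {b | a / 2 < b j} := by
    ext b
    simp only [Set.mem_ofPred_eq, Set.mem_inter_iff, truncSel]
    split_ifs with h <;> simp [h]
  rw [this]
  exact (measurableSet_le hc measurable_const).inter (hm j)

/-- The expected Hamming loss of the truncated support of `est` under the true vector
`spike a S`. -/
def hamRisk {n p : ℕ} (X : Matrix (Fin n) (Fin p) ℝ) (σ a : ℝ) (s : ℕ)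
    (est : (Fin n → ℝ) → Fin p → ℝ) (S : Finset (Fin p)) : ℝ :=
  ∫ ξ, ham (truncSel s a (est (X.mulVec (spike a S) + σ • ξ))) S ∂(stdGV n)

section

variable {n p : ℕ} (X : Matrix (Fin n) (Fin p) ℝ) (σ a : ℝ) (s : ℕ)
  {est : (Fin n → ℝ) → Fin p → ℝ} (hest : Measurable est) (S : Finset (Fin p))

lemma measurableSet_err (hest : Measurable est) (j : Fin p) : MeasurableSet
    {ξ | ¬ (j ∈ truncSel s a (est (X.mulVec (spike a S) + σ • ξ)) ↔ j ∈ S)} := by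
  have h : MeasurableSet {ξ | j ∈ truncSel s a (est (X.mulVec (spike a S) + σ • ξ))} :=
    (show Measurable fun ξ : Fin n → ℝ => est (X.mulVec (spike a S) + σ • ξ) from
      hest.comp (by fun_prop)) (measurableSet_truncSel s a j)
  by_cases hj : j ∈ S
  · simp only [hj, iff_true]
    exact h.compl
  · simp only [hj, iff_false, not_not]
    exact h

lemma integrable_err (hest : Measurable est) (j : Fin p) : Integrable (fun ξ =>
    if (j ∈ truncSel s a (est (X.mulVec (spike a S) + σ • ξ)) ↔ j ∈ S) then (0 : ℝ) else 1)
    (stdGV n) := by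
  have : IsProbabilityMeasure (stdGV n) := by unfold stdGV; infer_instance
  have h := (integrable_const (μ := stdGV n) (1 : ℝ)).indicator (measurableSet_err X σ a s S hest j)
  refine h.congr (.of_forall fun ξ => ?_)
  simp only [Set.indicator_apply, Set.mem_ofPred_eq, ite_not]

lemma integrable_ham (hest : Measurable est) : Integrable (fun ξ =>
    ham (truncSel s a (est (X.mulVec (spike a S) + σ • ξ))) S) (stdGV n) :=
  integrable_finsetSum _ fun j _ => integrable_err X σ a s S hest j

lemma hamRisk_eq_sum (hest : Measurable est) : hamRisk X σ a s est S = ∑ j, (stdGV n).real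
    {ξ | ¬ (j ∈ truncSel s a (est (X.mulVec (spike a S) + σ • ξ)) ↔ j ∈ S)} := by
  rw [hamRisk]
  simp only [ham]
  rw [integral_finsetSum _ fun j _ => integrable_err X σ a s S hest j]
  refine Finset.sum_congr rfl fun j _ => ?_
  rw [← integral_indicator_one (measurableSet_err X σ a s S hest j)]
  refine integral_congr_ae (.of_forall fun ξ => ?_)
  simp only [Set.indicator_apply, Set.mem_ofPred_eq, ite_not, Pi.one_apply]

lemma hamRisk_nonneg : 0 ≤ hamRisk X σ a s est S :=
  integral_nonneg fun ξ => by rw [ham_eq_card]; positivity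

lemma hamRisk_le (hest : Measurable est) : hamRisk X σ a s est S ≤ 2 * s + S.card := by
  have : IsProbabilityMeasure (stdGV n) := by unfold stdGV; infer_instance
  have hle : ∀ T : Finset (Fin p), T.card ≤ 2 * s → ham T S ≤ 2 * s + S.card := by
    intro T hT
    have h : (symmDiff T S).card ≤ 2 * s + S.card :=
      ((Finset.card_le_card symmDiff_le_sup).trans (Finset.card_union_le _ _)).trans
        (Nat.add_le_add_right hT _)
    rw [ham_eq_card]
    exact_mod_cast h
  have h := integral_mono (integrable_ham X σ a s S hest) (integrable_const (2 * s + S.card : ℝ))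
    fun ξ => hle _ (card_truncSel_le s a _)
  simpa [hamRisk] using h

lemma hamRisk_le_linRisk {q : ℝ} (ha : 0 < a) (hq : 1 ≤ q) (hest : Measurable est)
    (hS : S.card ≤ s) : ENNReal.ofReal ((a / 2) ^ q * hamRisk X σ a s est S)
      ≤ linRisk n p X σ q est (spike a S) := by
  rw [hamRisk, ← integral_const_mul, ofReal_integral_eq_lintegral_ofReal
    ((integrable_ham X σ a s S hest).const_mul _)
    (.of_forall fun ξ => by simp only [ham_eq_card]; positivity)]
  exact lintegral_mono fun ξ => ENNReal.ofReal_le_ofReal (loss_ge_ham ha hq _ hS)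

end

/-! ### The Bayes lower bound -/

/-- The Bayes risk of support recovery under the Bernoulli prior with success probability `s' / p`
is at least `s' / s` times `Ψ`. -/
lemma bayes_hamRisk {n p s : ℕ} (X : Matrix (Fin n) (Fin p) ℝ)
    (hX : ∀ j, (fun i => X i j) ≠ 0) {σ a : ℝ} (hσ : 0 < σ) (ha : 0 < a) (hs : 1 ≤ s)
    (hsp : s < p) {s' : ℝ} (hs' : 0 < s') (hss : s' < s)
    {est : (Fin n → ℝ) → Fin p → ℝ} (hest : Measurable est) :
    s' / s * PsiX n p s X σ a ≤ ∑ S, bernWeight (s' / p) S * hamRisk X σ a s est S := by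
  have hs0 : (0 : ℝ) < s := by exact_mod_cast hs
  have hsp' : (s : ℝ) < p := by exact_mod_cast hsp
  have hp : (0 : ℝ) < p := hs0.trans hsp'
  have hπ : s' / p = s' / s * (s / p) := by field_simp
  simp_rw [hamRisk_eq_sum X σ a s _ hest, Finset.mul_sum]
  rw [Finset.sum_comm, PsiX, Finset.mul_sum]
  refine Finset.sum_le_sum fun j _ => ?_
  rw [hπ]
  refine bayes_coord j _ _ _ (by positivity) ((div_le_one hp).2 hsp'.le) (by positivity)
    ((div_le_one hs0).2 hss.le) _ (fun S => measureReal_nonneg) fun S hj => ?_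
  have hr2 : 0 < ∑ i, X i j ^ 2 := by
    obtain ⟨i, hi⟩ := Function.ne_iff.1 (hX j)
    exact Finset.sum_pos' (fun _ _ => sq_nonneg _) ⟨i, Finset.mem_univ _, by
      have : X i j ≠ 0 := hi
      positivity⟩
  have hB : MeasurableSet {y | j ∈ truncSel s a (est y)} := hest (measurableSet_truncSel s a j)
  have := testing_lower_bound (fun i => X i j) (X.mulVec (spike a S)) σ a (s / p)
    (colNorm n p X j) (tj n p s X σ a j) hσ ha (by positivity) ((div_lt_one hp).2 hsp')
    (Real.sqrt_pos.2 hr2) (Real.sq_sqrt hr2.le)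
    (by rw [tj, show (p : ℝ) / s - 1 = (1 - s / p) / (s / p) by field_simp]) hB
  refine this.trans (le_of_eq ?_)
  simp only [hj, iff_false, not_not, Finset.mem_insert_self, iff_true, mulVec_spike_insert X a hj,
    Set.mem_ofPred_eq]

/-- Theorem: lower bound for the scaled minimax risk in terms of `Ψ`. -/
theorem stmt_3 (n p : ℕ) (X : Matrix (Fin n) (Fin p) ℝ)
    (hX : ∀ j, (fun i => X i j) ≠ 0)
    (σ q a : ℝ) (hσ : 0 < σ) (hq : 1 ≤ q) (ha : 0 < a)
    (s : ℕ) (hs : 1 ≤ s) (hsp : s < p) :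
    ∀ s' : ℝ, 0 < s' → s' < s →
    (⨅ (est : (Fin n → ℝ) → Fin p → ℝ) (_ : Measurable est),
        ⨆ β ∈ sparseSet p s a, linRisk n p X σ q est β) ≥
      ENNReal.ofReal (a ^ q * (s' / s) *
        ((2 : ℝ) ^ (-q) * PsiX n p s X σ a
          - 2 * s * Real.exp (-((s : ℝ) - s') ^ 2 / (2 * s)))) := by
  intro s' hs' hss
  refine le_iInf₂ fun est hest => ?_
  have hs0 : (0 : ℝ) < s := hs'.trans hss
  have hsp' : (s : ℝ) < p := by exact_mod_cast hsp
  have hp : (0 : ℝ) < p := hs0.trans hsp'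
  have hw : ∀ S : Finset (Fin p), 0 ≤ bernWeight (s' / p) S :=
    bernWeight_nonneg (by positivity) ((div_le_one hp).2 (hss.trans hsp').le)
  set E := Real.exp (-((s : ℝ) - s') ^ 2 / (2 * s)) with hE
  have hE0 : 0 < E := Real.exp_pos _
  -- the least favourable support of size at most `s`
  obtain ⟨S₀, hS₀, hmax⟩ := Finset.exists_max_image
    (Finset.univ.filter fun S : Finset (Fin p) => S.card ≤ s) (hamRisk X σ a s est)
    ⟨∅, by simp⟩
  have hS₀' : S₀.card ≤ s := (Finset.mem_filter.1 hS₀).2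
  have hM0 := hamRisk_nonneg (est := est) X σ a s S₀
  have hbayes : s' / s * PsiX n p s X σ a ≤ hamRisk X σ a s est S₀ + 3 * (s' * E) := by
    refine (bayes_hamRisk X hX hσ ha hs hsp hs' hss hest).trans ?_
    calc _ ≤ ∑ S : Finset (Fin p), (bernWeight (s' / p) S * hamRisk X σ a s est S₀
          + 3 * (bernWeight (s' / p) S * (if s < S.card then (S.card : ℝ) else 0))) := by
          refine Finset.sum_le_sum fun S _ => ?_
          have : hamRisk X σ a s est S
              ≤ hamRisk X σ a s est S₀ + 3 * (if s < S.card then (S.card : ℝ) else 0) := by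
            split_ifs with h
            · have h1 := hamRisk_le X σ a s S hest
              have h2 : (s : ℝ) ≤ S.card := by exact_mod_cast h.le
              linarith
            · have := hmax S (by simpa using h)
              linarith
          have := mul_le_mul_of_nonneg_left this (hw S)
          linarith
      _ ≤ _ := by
          rw [Finset.sum_add_distrib, ← Finset.sum_mul, sum_bernWeight, one_mul, ← Finset.mul_sum]
          have := tail_bound (p := p) hs' hss hsp
          linarith
  refine le_trans ?_ (le_iSup₂_of_le (spike a S₀) (spike_mem hS₀')
    (hamRisk_le_linRisk X σ a s S₀ ha hq hest hS₀'))
  refine ENNReal.ofReal_le_ofReal ?_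
  have hc0 : (0 : ℝ) < 2 ^ (-q) := by positivity
  have hc : (2 : ℝ) ^ (-q) ≤ 1 / 2 := by
    have := Real.rpow_le_rpow_of_exponent_le (x := (2 : ℝ)) one_le_two (neg_le_neg hq)
    rwa [Real.rpow_neg_one, ← one_div] at this
  have haq : (a / 2) ^ q = a ^ q * 2 ^ (-q) := by
    rw [Real.div_rpow ha.le zero_le_two, Real.rpow_neg zero_le_two, div_eq_mul_inv]
  rw [haq, mul_assoc (a ^ q) (s' / s), mul_assoc (a ^ q) (2 ^ (-q))]
  refine mul_le_mul_of_nonneg_left ?_ (Real.rpow_nonneg ha.le q)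
  have e : s' / s * ((2 : ℝ) ^ (-q) * PsiX n p s X σ a - 2 * s * E)
      = 2 ^ (-q) * (s' / s * PsiX n p s X σ a) - 2 * (s' * E) := by
    field_simp
  rw [e]
  have h1 := mul_le_mul_of_nonneg_left hbayes hc0.le
  have h2 : (2 : ℝ) ^ (-q) * (s' * E) ≤ 1 / 2 * (s' * E) := by gcongr
  have h3 : 0 < s' * E := by positivity
  linarith

end
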